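/- Assume that the dominating number 𝔡 is regular (cf(𝔡) = 𝔡). Then for every 𝔡-Lusin set X ⊆ [ω]^ω there is a set Y ⊆ P(ℕ) such that every finite power of Y is Menger but the product space X × Y is not Menger. -/

import Mathlib

open Cardinal

/-- Subsets of `ℕ` are identified with their characteristic functions `ℕ → Bool`;
this way `P(ℕ)` is the Cantor cube `2^ℕ`, carrying the product topology. -/
abbrev CSet : Type := ℕ → Bool

/-- The subset of `ℕ` coded by `a : CSet`. -/
def supp (a : CSet) : Set ℕ := {n | a n = true}

/-- `a ∈ [ω]^ω`: the coded set is infinite. -/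
def InfS (a : CSet) : Prop := (supp a).Infinite

/-- The increasing enumeration of the set coded by `a`. -/
noncomputable def enum (a : CSet) : ℕ → ℕ := Nat.nth (fun n => a n = true)

/-- `a ≤* b`: the set `[a ≤ b]` (computed on increasing enumerations) is cofinite. -/
def LeStarS (a b : CSet) : Prop := {n | ¬ enum a n ≤ enum b n}.Finite

/-- `a ≤_U b`: the set `[a ≤ b]` (computed on increasing enumerations) is in `U`. -/
def LeUS (U : Ultrafilter ℕ) (a b : CSet) : Prop := {n | enum a n ≤ enum b n} ∈ U

/-- An ultrafilter is free if it extends the cofinite filter. -/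
def Free (U : Ultrafilter ℕ) : Prop := (U : Filter ℕ) ≤ Filter.cofinite

/-- A subset of `[ω]^ω` is bounded if some element of `[ω]^ω` `≤*`-dominates it. -/
def BoundedS (A : Set CSet) : Prop := ∃ b : CSet, InfS b ∧ ∀ a ∈ A, LeStarS a b

/-- A subset of `[ω]^ω` is `≤_U`-bounded if some element of `[ω]^ω` `≤_U`-dominates it. -/
def UBoundedS (U : Ultrafilter ℕ) (A : Set CSet) : Prop :=
  ∃ b : CSet, InfS b ∧ ∀ a ∈ A, LeUS U a b

/-- `D ⊆ [ω]^ω` is dominating if it `≤*`-dominates every element of `[ω]^ω`. -/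
def DominatingS (D : Set CSet) : Prop :=
  (∀ d ∈ D, InfS d) ∧ ∀ a : CSet, InfS a → ∃ d ∈ D, LeStarS a d

/-- `𝔡`: the least cardinality of a dominating subset of `[ω]^ω`. -/
noncomputable def frakDS : Cardinal := sInf {c | ∃ D : Set CSet, DominatingS D ∧ c = #D}

/-- `𝔟(U)`: the least cardinality of a `≤_U`-unbounded subset of `[ω]^ω`. -/
noncomputable def frakBUS (U : Ultrafilter ℕ) : Cardinal :=
  sInf {c | ∃ A : Set CSet, (∀ a ∈ A, InfS a) ∧ ¬ UBoundedS U A ∧ c = #A}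

/-- `Y ⊆ [ω]^ω` is a `U`-scale if for every `b ∈ [ω]^ω` the relation `b ≤_U y` holds
for all but fewer than `𝔟(U)` many `y ∈ Y`. -/
def UScaleS (U : Ultrafilter ℕ) (Y : Set CSet) : Prop :=
  (∀ y ∈ Y, InfS y) ∧
    ∀ b : CSet, InfS b → #({y ∈ Y | ¬ LeUS U b y} : Set CSet) < frakBUS U

/-- `Fin`: the family of (codes of) finite subsets of `ℕ`. -/
def FinS : Set CSet := {a | (supp a).Finite}

/-- `2u := {2n : n ∈ u}` on codes. -/
def double (x : CSet) : CSet := fun n => if n % 2 = 0 then x (n / 2) else false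

/-- `a ⊎ b := {2k : k ∈ a} ∪ {2k+1 : k ∈ b}` on codes. -/
def uplus (a b : CSet) : CSet := fun n => if n % 2 = 0 then a (n / 2) else b (n / 2)

/-- Symmetric difference `⊕` on codes. -/
def symmD (a b : CSet) : CSet := fun n => xor (a n) (b n)

/-- `2U`: the ultrafilter generated by `{2u : u ∈ U}`, i.e. the pushforward of `U`
under `n ↦ 2n`. -/
def twoU (U : Ultrafilter ℕ) : Ultrafilter ℕ := U.map (fun n => 2 * n)

/-- A space is Menger if for every sequence of open covers there are finite
subfamilies whose unions form a cover. -/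
def Menger (Z : Type*) [TopologicalSpace Z] : Prop :=
  ∀ 𝒰 : ℕ → Set (Set Z), (∀ n, (∀ u ∈ 𝒰 n, IsOpen u) ∧ ⋃₀ 𝒰 n = Set.univ) →
    ∃ F : ℕ → Set (Set Z), (∀ n, F n ⊆ 𝒰 n ∧ (F n).Finite) ∧ (⋃ n, ⋃₀ F n) = Set.univ

/-- `[ω]^ω` as a subspace of the Cantor cube `P(ℕ)`. -/
def OmegaInf : Set CSet := {a | InfS a}

/-!
Let `(d α)`, `α < 𝔡`, enumerate a dominating set. Since `𝔡` is regular, a `𝔡`-Lusin set `X` is not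
covered by fewer than `𝔡` meagre sets, and for infinite `u ⊆ ℕ` the `x` with `[b ≤ x] ∩ u` finite
form a meagre set. So one can choose `x α ∈ X` by recursion such that the sets `[d α ≤ x β]`,
`α < β`, together with the cofinite sets generate a proper filter; let `U` be an ultrafilter
extending it. Then `𝔡 ≤ 𝔟(U)` and `(x α)` is a `U`-scale.

Take `z α ⊆ x α` infinite and so thin that `(z α)` dominates as well. As `z α` lies inside `x α`,
the sets `x α ⊎ z α` form a `2U`-scale, and the union `Y` of a `2U`-scale with `Fin` has all its
finite powers `2U`-Menger. On the other hand, `(x, y) ↦ 2x ⊕ y` maps `X × Y` continuously into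
`[ω]^ω`, and the values `2(x α) ⊕ (x α ⊎ z α) = ∅ ⊎ z α` make the image dominating, which is
impossible for a continuous image of a Menger space.
-/

open Filter Topology

section Enumeration

/-- The number of elements below `m` of the set coded by `a`. Unlike the enumeration, whose values
are junk from some index on if the set is finite, it is meaningful for all codes and continuous
in `a`. -/
def cardBelow (a : CSet) (m : ℕ) : ℕ := Nat.count (fun i => a i = true) m

lemma cardBelow_mono (a : CSet) : Monotone (cardBelow a) := Nat.count_monotone _

lemma cardBelow_le_cardBelow {a b : CSet} (h : supp a ⊆ supp b) (m : ℕ) :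
    cardBelow a m ≤ cardBelow b m :=
  Nat.count_mono_left fun _ _ ha => h ha

lemma continuous_cardBelow (m : ℕ) : Continuous fun a : CSet => cardBelow a m := by
  have hsum : (fun a : CSet => cardBelow a m) = fun a => ∑ i ∈ Finset.range m, (a i).toNat := by
    ext a
    rw [cardBelow, Nat.count_eq_card_filter_range, Finset.card_filter]
    exact Finset.sum_congr rfl fun i _ => by cases a i <;> rfl
  rw [hsum]
  exact continuous_finsetSum _ fun i _ =>
    (continuous_of_discreteTopology (f := Bool.toNat)).comp (continuous_apply i)

lemma InfS.cardBelow_le_iff {a : CSet} (ha : InfS a) {m n : ℕ} :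
    cardBelow a m ≤ n ↔ m ≤ enum a n :=
  Nat.count_le_iff_le_nth ha

lemma mem_FinS_iff_exists_cardBelow_le {a : CSet} :
    a ∈ FinS ↔ ∃ n, ∀ m, cardBelow a m ≤ n := by
  constructor
  · intro ha
    have ha : (supp a).Finite := ha
    refine ⟨ha.toFinset.card, fun m => ?_⟩
    rw [cardBelow, Nat.count_eq_card_filter_range]
    exact Finset.card_le_card fun i hi => ha.mem_toFinset.2 (Finset.mem_filter.1 hi).2
  · rintro ⟨n, hn⟩
    by_contra ha
    have hle : enum a n + 1 ≤ enum a n := (InfS.cardBelow_le_iff ha).1 (hn _)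
    omega

lemma InfS.strictMono_enum {a : CSet} (ha : InfS a) : StrictMono (enum a) :=
  Nat.nth_strictMono ha

lemma InfS.range_enum {a : CSet} (ha : InfS a) : Set.range (enum a) = supp a :=
  Nat.range_nth_of_infinite ha

lemma exists_infS_enum_eq {f : ℕ → ℕ} (hf : StrictMono f) : ∃ a, InfS a ∧ enum a = f := by
  classical
  let a : CSet := fun i => decide (i ∈ Set.range f)
  have hsupp : supp a = Set.range f := by
    ext i
    simp [supp, a]
  have ha : InfS a := by
    rw [InfS, hsupp]
    exact Set.infinite_range_of_injective hf.injective
  exact ⟨a, ha, (ha.strictMono_enum.range_inj hf).1 (ha.range_enum.trans hsupp)⟩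

lemma exists_strictMono_ge (g : ℕ → ℕ) : ∃ f : ℕ → ℕ, StrictMono f ∧ g ≤ f :=
  ⟨fun n => partialSups g n + n, (partialSups g).monotone.add_strictMono strictMono_id,
    fun n => (le_partialSups g n).trans (Nat.le_add_right _ _)⟩

lemma exists_infS_le_enum (g : ℕ → ℕ) : ∃ a, InfS a ∧ g ≤ enum a := by
  obtain ⟨f, hf, hgf⟩ := exists_strictMono_ge g
  obtain ⟨a, ha, rfl⟩ := exists_infS_enum_eq hf
  exact ⟨a, ha, hgf⟩

lemma InfS.exists_supp_subset_le_enum {a : CSet} (ha : InfS a) (g : ℕ → ℕ) :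
    ∃ b, InfS b ∧ supp b ⊆ supp a ∧ g ≤ enum b := by
  obtain ⟨s, hs, hgs⟩ := exists_strictMono_ge g
  obtain ⟨b, hb, hbs⟩ := exists_infS_enum_eq (ha.strictMono_enum.comp hs)
  refine ⟨b, hb, ?_, fun n => ?_⟩
  · rw [← hb.range_enum, hbs, ← ha.range_enum]
    exact Set.range_comp_subset_range _ _
  · rw [hbs]
    exact (hgs n).trans ha.strictMono_enum.le_apply

end Enumeration

section Codes

lemma cardBelow_uplus_two_mul (a b : CSet) (m : ℕ) :
    cardBelow (uplus a b) (2 * m) = cardBelow a m + cardBelow b m := by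
  induction m with
  | zero => rfl
  | succ m ih =>
    have heven : uplus a b (2 * m) = a m := by simp [uplus]
    have hodd : uplus a b (2 * m + 1) = b m := by
      simp [uplus, show (2 * m + 1) / 2 = m by omega]
    simp only [cardBelow, Nat.mul_succ, Nat.count_succ, heven, hodd] at ih ⊢
    omega

lemma cardBelow_uplus_le (a b : CSet) (m : ℕ) :
    cardBelow (uplus a b) m ≤ cardBelow a m + cardBelow b m :=
  (cardBelow_mono _ (by omega)).trans (cardBelow_uplus_two_mul a b m).le

lemma InfS.uplus_right (a : CSet) {b : CSet} (hb : InfS b) : InfS (uplus a b) := by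
  have hinj : Function.Injective fun n : ℕ => 2 * n + 1 := fun m n h => by
    dsimp only at h
    omega
  refine (hb.image hinj.injOn).mono ?_
  rintro _ ⟨n, hn : b n = true, rfl⟩
  simp [supp, uplus, show (2 * n + 1) / 2 = n by omega, hn]

lemma InfS.double {a : CSet} (ha : InfS a) : InfS (double a) := by
  have hinj : Function.Injective fun n : ℕ => 2 * n := fun m n h => by
    dsimp only at h
    omega
  refine (ha.image hinj.injOn).mono ?_
  rintro _ ⟨n, hn : a n = true, rfl⟩
  simp [supp, _root_.double, hn]

lemma InfS.symmD_of_mem_FinS {a b : CSet} (ha : InfS a) (hb : b ∈ FinS) : InfS (symmD a b) := by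
  intro hfin
  refine ha ((hfin.union hb).subset fun n (hn : a n = true) => ?_)
  cases hbn : b n <;> simp [supp, symmD, hn, hbn]

lemma symmD_double_uplus (a b c : CSet) : symmD (double a) (uplus b c) = uplus (symmD a b) c := by
  funext n
  by_cases hn : n % 2 = 0 <;> simp [symmD, double, uplus, hn]

lemma continuous_symmD_double : Continuous fun p : CSet × CSet => symmD (double p.1) p.2 := by
  refine continuous_pi fun n => ?_
  have hxor : Continuous fun q : Bool × Bool => xor q.1 q.2 := continuous_of_discreteTopology
  have hdouble : Continuous fun p : CSet × CSet => double p.1 n := by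
    by_cases hn : n % 2 = 0 <;> simp only [double, hn, if_true, if_false] <;> fun_prop
  exact hxor.comp (hdouble.prodMk (by fun_prop))

end Codes

section Menger

variable {Z : Type*} [TopologicalSpace Z]

lemma Menger.exists_forall_exists_lt (hZ : Menger Z) {f : ℕ → Z → ℕ}
    (hf : ∀ n, UpperSemicontinuous (f n)) : ∃ g : ℕ → ℕ, ∀ z, ∃ n, f n z < g n := by
  let 𝒰 : ℕ → Set (Set Z) := fun n => Set.range fun m => f n ⁻¹' Set.Iio m
  obtain ⟨F, hF, hcover⟩ := hZ 𝒰 fun n => by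
    refine ⟨?_, Set.eq_univ_of_forall fun z => ?_⟩
    · rintro _ ⟨m, rfl⟩
      exact (hf n).isOpen_preimage m
    · exact ⟨_, Set.mem_range_self (f n z + 1), Nat.lt_succ_self _⟩
  have hbound : ∀ n, ∃ m, ∀ u ∈ F n, u ⊆ f n ⁻¹' Set.Iio m := by
    intro n
    choose! m hm using (hF n).1
    obtain ⟨M, hM⟩ := ((hF n).2.image m).bddAbove
    refine ⟨M, fun u hu => (hm hu).symm.subset.trans ?_⟩
    exact Set.preimage_mono (Set.Iio_subset_Iio (hM (Set.mem_image_of_mem m hu)))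
  choose g hg using hbound
  refine ⟨g, fun z => ?_⟩
  obtain ⟨n, u, hu, hz⟩ := Set.mem_iUnion.1 (hcover.symm ▸ Set.mem_univ z)
  exact ⟨n, hg n u hu hz⟩

lemma menger_of_forall_upperSemicontinuous [LindelofSpace Z]
    (h : ∀ f : ℕ → Z → ℕ, (∀ n, UpperSemicontinuous (f n)) →
      ∃ g : ℕ → ℕ, ∀ z, ∃ n, f n z < g n) : Menger Z := by
  intro 𝒰 h𝒰
  choose T hT𝒰 hTc hT using fun n => isLindelof_univ.elim_countable_subcover_image
    (c := id) (h𝒰 n).1 (by rw [← (h𝒰 n).2, Set.sUnion_eq_biUnion]; rfl)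
  choose e he using fun n => Set.countable_iff_exists_injOn.1 (hTc n)
  let f : ℕ → Z → ℕ := fun n z => sInf (e n '' {u ∈ T n | z ∈ u})
  have hf : ∀ n z m, f n z < m ↔ ∃ u ∈ T n, z ∈ u ∧ e n u < m := by
    intro n z m
    obtain ⟨u, hu, hz⟩ := Set.mem_iUnion₂.1 (hT n (Set.mem_univ z))
    have hne : (e n '' {u ∈ T n | z ∈ u}).Nonempty := ⟨_, u, ⟨hu, hz⟩, rfl⟩
    rw [csInf_lt_iff (OrderBot.bddBelow _) hne, Set.exists_mem_image]
    simp only [Set.mem_ofPred_eq, and_assoc]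
  have husc : ∀ n, UpperSemicontinuous (f n) := by
    refine fun n => upperSemicontinuous_iff_isOpen_preimage.2 fun m => ?_
    have hpre : f n ⁻¹' Set.Iio m = ⋃₀ {u ∈ T n | e n u < m} := by
      ext z
      simp only [Set.mem_preimage, Set.mem_Iio, hf, Set.mem_sUnion, Set.mem_ofPred_eq]
      grind
    rw [hpre]
    exact isOpen_sUnion fun u hu => (h𝒰 n).1 u (hT𝒰 n hu.1)
  obtain ⟨g, hg⟩ := h f husc
  refine ⟨fun n => {u ∈ T n | e n u < g n}, fun n => ⟨fun u hu => hT𝒰 n hu.1, ?_⟩, ?_⟩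
  · exact .of_injOn (fun u hu => hu.2) ((he n).mono fun u hu => hu.1) (Set.finite_Iio (g n))
  · refine Set.eq_univ_of_forall fun z => ?_
    obtain ⟨n, hn⟩ := hg z
    obtain ⟨u, hu, hz, hlt⟩ := (hf n z _).1 hn
    exact Set.mem_iUnion.2 ⟨n, u, ⟨hu, hlt⟩, hz⟩

lemma Menger.exists_forall_frequently_lt (hZ : Menger Z) {f : ℕ → Z → ℕ}
    (hf : ∀ n, UpperSemicontinuous (f n)) :
    ∃ g : ℕ → ℕ, ∀ z, ∃ᶠ n in atTop, f n z < g n := by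
  choose g hg using fun N => hZ.exists_forall_exists_lt fun n => hf (N + n)
  refine ⟨fun n => (Finset.range (n + 1)).sup fun N => g N (n - N), fun z =>
    frequently_atTop.2 fun N => ?_⟩
  obtain ⟨n, hn⟩ := hg N z
  refine ⟨N + n, Nat.le_add_right _ _, hn.trans_le ?_⟩
  have hN : N ∈ Finset.range (N + n + 1) := Finset.mem_range.2 (by omega)
  simpa using Finset.le_sup (f := fun M => g M (N + n - M)) hN

lemma upperSemicontinuous_enum {φ : Z → CSet} (hφ : Continuous φ) (hinf : ∀ z, InfS (φ z))
    (n : ℕ) : UpperSemicontinuous fun z => enum (φ z) n := by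
  refine upperSemicontinuous_iff_isOpen_preimage.2 fun m => ?_
  have hpre : (fun z => enum (φ z) n) ⁻¹' Set.Iio m =
      (fun z => cardBelow (φ z) m) ⁻¹' Set.Ioi n := by
    ext z
    exact lt_iff_lt_of_le_iff_le (hinf z).cardBelow_le_iff.symm
  rw [hpre]
  exact (isOpen_discrete _).preimage ((continuous_cardBelow m).comp hφ)

/-- One half of Hurewicz's characterization of the Menger property. -/
theorem Menger.not_dominatingS_range (hZ : Menger Z) {φ : Z → CSet} (hφ : Continuous φ)
    (hinf : ∀ z, InfS (φ z)) : ¬ DominatingS (Set.range φ) := by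
  intro hD
  obtain ⟨g, hg⟩ := hZ.exists_forall_frequently_lt (upperSemicontinuous_enum hφ hinf)
  obtain ⟨a, ha, hga⟩ := exists_infS_le_enum g
  obtain ⟨_, ⟨z, rfl⟩, haz⟩ := hD.2 a ha
  exact Nat.frequently_atTop_iff_infinite.1 (hg z)
    (haz.subset fun n hn => not_le.2 (hn.trans_le (hga n)))

theorem not_menger_prod_range_uplus_union_FinS {I : Type*} {X : Set OmegaInf}
    {x : I → OmegaInf} (hxX : ∀ i, x i ∈ X) {z : I → CSet} (hz : DominatingS (Set.range z)) :
    ¬ Menger (X × (Set.range (fun i => uplus (x i).1 (z i)) ∪ FinS : Set CSet)) := by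
  set Y : Set CSet := Set.range (fun i => uplus (x i).1 (z i)) ∪ FinS
  intro hM
  let φ : X × Y → CSet := fun p => symmD (double p.1.1.1) p.2.1
  have hφ : Continuous φ := continuous_symmD_double.comp
    (f := fun p : X × Y => (p.1.1.1, p.2.1)) (by fun_prop)
  have hzinf : ∀ i, InfS (z i) := fun i => hz.1 _ (Set.mem_range_self i)
  have hinf : ∀ p, InfS (φ p) := by
    rintro ⟨a, _, ⟨i, rfl⟩ | hy⟩
    · exact (congrArg InfS (symmD_double_uplus _ _ _)).mpr ((hzinf i).uplus_right _)
    · exact (InfS.double a.1.2).symmD_of_mem_FinS hy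
  refine hM.not_dominatingS_range hφ hinf ⟨Set.forall_mem_range.2 hinf, fun a ha => ?_⟩
  obtain ⟨_, ⟨i, rfl⟩, hai⟩ := hz.2 a ha
  let p : X × Y := (⟨x i, hxX i⟩, ⟨uplus (x i).1 (z i), Or.inl (Set.mem_range_self i)⟩)
  have hφp : φ p = uplus (fun _ => false) (z i) := by
    have hself : symmD (x i).1 (x i).1 = fun _ => false := by
      funext n
      simp [symmD]
    rw [← hself, ← symmD_double_uplus]
  have hle : enum (z i) ≤ enum (φ p) := by
    intro n
    rw [← (hinf p).cardBelow_le_iff, hφp]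
    refine (cardBelow_uplus_le _ _ _).trans ?_
    have hempty : ∀ m, cardBelow (fun _ => false) m = 0 := by simp [cardBelow]
    rw [hempty, zero_add]
    exact (hzinf i).cardBelow_le_iff.2 le_rfl
  exact ⟨φ p, Set.mem_range_self p, hai.subset fun n hn h => hn (h.trans (hle n))⟩

end Menger

section Ultrafilter

variable {U : Ultrafilter ℕ}

lemma Free.map (hU : Free U) {f : ℕ → ℕ} (hf : f.Injective) : Free (U.map f) :=
  (Filter.map_mono hU).trans hf.tendsto_cofinite

lemma LeStarS.leUS (hU : Free U) {a b : CSet} (h : LeStarS a b) : LeUS U a b :=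
  hU (by simpa [LeStarS, Set.compl_ofPred] using h)

lemma LeUS.trans {a b c : CSet} (hab : LeUS U a b) (hbc : LeUS U b c) : LeUS U a c := by
  filter_upwards [hab, hbc] with n using le_trans

lemma exists_free_ultrafilter_of_infinite_iInter {ι : Type*} {A : ι → Set ℕ}
    (hA : ∀ F : Set ι, F.Finite → (⋂ i ∈ F, A i).Infinite) :
    ∃ U : Ultrafilter ℕ, Free U ∧ ∀ i, A i ∈ U := by
  have hne : ((⨅ i, 𝓟 (A i)) ⊓ cofinite).NeBot := by
    refine inf_neBot_iff_frequently_left.2 fun {p} hp => ?_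
    obtain ⟨F, hF, hFp⟩ := (hasBasis_iInf_principal_finite A).eventually_iff.1 hp
    exact frequently_cofinite_iff_infinite.2 ((hA F hF).mono fun n hn => hFp hn)
  obtain ⟨U, hU⟩ := Ultrafilter.exists_le ((⨅ i, 𝓟 (A i)) ⊓ cofinite)
  exact ⟨U, hU.trans inf_le_right,
    fun i => le_principal_iff.1 ((hU.trans inf_le_left).trans (iInf_le _ i))⟩

lemma uBoundedS_of_mk_lt {A : Set CSet} (hA : ∀ a ∈ A, InfS a) (hcard : #A < frakBUS U) :
    UBoundedS U A := by
  by_contra hAU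
  exact notMem_of_lt_csInf' hcard ⟨A, hA, hAU, rfl⟩

lemma le_frakBUS {κ : Cardinal}
    (h : ∀ A : Set CSet, (∀ a ∈ A, InfS a) → #A < κ → UBoundedS U A) : κ ≤ frakBUS U := by
  have hunbdd : ¬ UBoundedS U {a | InfS a} := by
    rintro ⟨b, -, hb⟩
    obtain ⟨a, ha, hba⟩ := exists_infS_le_enum fun n => enum b n + 1
    obtain ⟨n, hn : enum a n ≤ enum b n⟩ := U.nonempty_of_mem (hb a ha)
    exact absurd (hba n) (by dsimp only; omega)
  refine le_csInf ⟨_, {a | InfS a}, fun _ => id, hunbdd, rfl⟩ ?_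
  rintro _ ⟨A, hA, hAU, rfl⟩
  exact not_lt.1 fun hlt => hAU (h A hA hlt)

lemma exists_forall_eventually_le_of_mk_lt {J : Type} (g : J → ℕ → ℕ) (hJ : #J < frakBUS U) :
    ∃ h : ℕ → ℕ, ∀ j, ∀ᶠ n in (U : Filter ℕ), g j n ≤ h n := by
  choose a ha hga using fun j => exists_infS_le_enum (g j)
  obtain ⟨b, -, hb⟩ :=
    uBoundedS_of_mk_lt (Set.forall_mem_range.2 ha) (mk_range_le.trans_lt hJ)
  refine ⟨enum b, fun j => ?_⟩
  filter_upwards [hb _ (Set.mem_range_self j)] with n hn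
  exact (hga j n).trans hn

lemma frakBUS_le_frakBUS_map {f : ℕ → ℕ} (hf : f.Injective) : frakBUS U ≤ frakBUS (U.map f) := by
  refine le_frakBUS fun A _ hcard => ?_
  obtain ⟨h, hh⟩ :=
    exists_forall_eventually_le_of_mk_lt (fun (a : A) n => enum a.1 (f n)) hcard
  obtain ⟨b, hb, hhb⟩ := exists_infS_le_enum (Function.extend f h 0)
  refine ⟨b, hb, fun a ha => ?_⟩
  have hab : ∀ᶠ n in (U : Filter ℕ), enum a (f n) ≤ enum b (f n) := by
    filter_upwards [hh ⟨a, ha⟩] with n hn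
    exact (hn.trans_eq (hf.extend_apply h 0 n).symm).trans (hhb (f n))
  exact hab

theorem uScaleS_twoU_range_uplus {I : Type} {x z : I → CSet} (hx : ∀ i, InfS (x i))
    (hz : ∀ i, InfS (z i)) (hzx : ∀ i, supp (z i) ⊆ supp (x i))
    (hscale : ∀ b, InfS b → #{i | ¬ LeUS U b (x i)} < frakBUS U) :
    UScaleS (twoU U) (Set.range fun i => uplus (x i) (z i)) := by
  have hinf : ∀ i, InfS (uplus (x i) (z i)) := fun i => (hz i).uplus_right _
  refine ⟨Set.forall_mem_range.2 hinf, fun b _ => ?_⟩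
  obtain ⟨c, hc, hbc⟩ := exists_infS_le_enum fun n => enum b (2 * n)
  have hle : ∀ i, LeUS U c (x i) → LeUS (twoU U) b (uplus (x i) (z i)) := by
    intro i hci
    have hev : ∀ᶠ n in (U : Filter ℕ), enum b (2 * n) ≤ enum (uplus (x i) (z i)) (2 * n) := by
      filter_upwards [hci] with n hn
      have hxn : cardBelow (x i) (enum b (2 * n)) ≤ n :=
        (hx i).cardBelow_le_iff.2 ((hbc n).trans hn)
      refine (hinf i).cardBelow_le_iff.1 ((cardBelow_uplus_le _ _ _).trans ?_)
      have hzn := cardBelow_le_cardBelow (hzx i) (enum b (2 * n))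
      omega
    exact hev
  have hsub : {y ∈ Set.range fun i => uplus (x i) (z i) | ¬ LeUS (twoU U) b y} ⊆
      (fun i => uplus (x i) (z i)) '' {i | ¬ LeUS U c (x i)} := by
    rintro _ ⟨⟨i, rfl⟩, hi⟩
    exact ⟨i, fun hci => hi (hle i hci), rfl⟩
  calc #({y ∈ Set.range fun i => uplus (x i) (z i) | ¬ LeUS (twoU U) b y} : Set CSet)
      ≤ #{i | ¬ LeUS U c (x i)} := (mk_le_mk_of_subset hsub).trans mk_image_le
    _ < frakBUS U := hscale c hc
    _ ≤ frakBUS (twoU U) := frakBUS_le_frakBUS_map (mul_right_injective₀ two_ne_zero)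

end Ultrafilter

section UMenger

variable {U : Ultrafilter ℕ}

/-- `U`-Menger spaces: for every sequence of open covers there are finite subfamilies which cover
each point at `U`-many indices. An upper semicontinuous `f n : Z → ℕ` encodes the increasing open
cover of `Z` by the sets `{z | f n z < m}`. This strengthening of the Menger property is the one
that passes to finite powers by induction. -/
def UMenger (U : Ultrafilter ℕ) (Z : Type*) [TopologicalSpace Z] : Prop :=
  ∀ f : ℕ → Z → ℕ, (∀ n, UpperSemicontinuous (f n)) →
    ∃ g : ℕ → ℕ, ∀ z, ∀ᶠ n in (U : Filter ℕ), f n z < g n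

lemma UMenger.menger {Z : Type*} [TopologicalSpace Z] [LindelofSpace Z] (hZ : UMenger U Z) :
    Menger Z :=
  menger_of_forall_upperSemicontinuous fun f hf =>
    (hZ f hf).imp fun _ hg z => (hg z).exists

lemma uMenger_of_subsingleton {Z : Type*} [TopologicalSpace Z] [Subsingleton Z] :
    UMenger U Z := by
  intro f _
  cases isEmpty_or_nonempty Z with
  | inl _ => exact ⟨0, isEmptyElim⟩
  | inr hZ =>
    obtain ⟨z₀⟩ := hZ
    refine ⟨fun n => f n z₀ + 1, fun z => .of_forall fun n => ?_⟩
    rw [Subsingleton.elim z z₀]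
    exact Nat.lt_succ_self _

lemma UMenger.exists_forall_eventually_lt_of_exists_mem {Z : Type} [TopologicalSpace Z] {k : ℕ}
    (hZ : UMenger U (Fin k → Z)) {f : ℕ → (Fin (k + 1) → Z) → ℕ}
    (hf : ∀ n, UpperSemicontinuous (f n)) {B : Set Z} (hB : #B < frakBUS U) :
    ∃ h : ℕ → ℕ, ∀ t, (∃ l, t l ∈ B) → ∀ᶠ n in (U : Filter ℕ), f n t < h n := by
  have hslice : ∀ (l : Fin (k + 1)) (y : B), ∃ g : ℕ → ℕ, ∀ t : Fin k → Z,
      ∀ᶠ n in (U : Filter ℕ), f n (l.insertNth y.1 t) < g n := fun l y =>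
    hZ _ fun n => (hf n).comp (Continuous.finInsertNth l continuous_const continuous_id)
  choose g hg using hslice
  choose h hh using fun l => exists_forall_eventually_le_of_mk_lt (g l) hB
  refine ⟨fun n => Finset.univ.sup (h · n), ?_⟩
  rintro t ⟨l, hl⟩
  filter_upwards [hg l ⟨t l, hl⟩ (l.removeNth t), hh l ⟨t l, hl⟩] with n hlt hle
  rw [Fin.insertNth_self_removeNth] at hlt
  exact (hlt.trans_le hle).trans_le (Finset.le_sup (f := (h · n)) (Finset.mem_univ l))

lemma isClosed_setOf_forall_cardBelow_le {ι : Type*} (m n : ℕ) :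
    IsClosed {t : ι → CSet | ∀ i, cardBelow (t i) m ≤ n} := by
  simp only [Set.ofPred_forall]
  exact isClosed_iInter fun i => (isClosed_discrete (Set.Iic n)).preimage
    ((continuous_cardBelow m).comp (continuous_apply i))

lemma exists_setOf_cardBelow_le_subset {ι : Type*} {O : Set (ι → CSet)} (hO : IsOpen O) {n : ℕ}
    (h : ∀ t : ι → CSet, (∀ i m, cardBelow (t i) m ≤ n) → t ∈ O) :
    ∃ m, {t : ι → CSet | ∀ i, cardBelow (t i) m ≤ n} ⊆ O := by
  refine exists_subset_nhds_of_compactSpace (Antitone.directed_ge ?_)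
    (fun m => isClosed_setOf_forall_cardBelow_le m n) fun t ht =>
      hO.mem_nhds (h t fun i m => Set.mem_iInter.1 ht m i)
  exact fun m m' hm t ht i => (cardBelow_mono _ hm).trans (ht i)

lemma exists_forall_cardBelow_le_lt {ι : Type*} {Y : Set CSet} (hY : FinS ⊆ Y)
    {f : (ι → Y) → ℕ} (hf : UpperSemicontinuous f) (n : ℕ) :
    ∃ m, ∀ t : ι → Y, (∀ i, cardBelow (t i).1 m ≤ n) → f t < m := by
  let e : (ι → Y) → ι → CSet := Pi.map fun _ y => y.1
  have he : IsInducing e := .piMap fun _ => .subtypeVal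
  choose W hWo hW using fun j => he.isOpen_iff.1 (hf.isOpen_preimage j)
  have hWiff : ∀ t j, e t ∈ W j ↔ f t < j := fun t j => Set.ext_iff.1 (hW j) t
  let K : Set (ι → CSet) := ⋂ m, {t | ∀ i, cardBelow (t i) m ≤ n}
  have hKc : IsCompact K := by
    refine (isClosed_iInter fun m => ?_).isCompact
    exact isClosed_setOf_forall_cardBelow_le m n
  have hKW : K ⊆ ⋃ j, W j := by
    intro t ht
    have htn : ∀ i m, cardBelow (t i) m ≤ n := fun i m => Set.mem_iInter.1 ht m i
    let s : ι → Y := fun i => ⟨t i, hY (mem_FinS_iff_exists_cardBelow_le.2 ⟨n, htn i⟩)⟩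
    exact Set.mem_iUnion.2 ⟨f s + 1, (hWiff s _).2 (Nat.lt_succ_self _)⟩
  obtain ⟨T, hT⟩ := hKc.elim_finite_subcover W hWo hKW
  obtain ⟨m, hm⟩ := exists_setOf_cardBelow_le_subset (isOpen_biUnion fun j (_ : j ∈ T) => hWo j)
    fun t ht => hT (Set.mem_iInter.2 fun m i => ht i m)
  refine ⟨max m (T.sup id), fun t ht => ?_⟩
  obtain ⟨j, hjT, hj⟩ := Set.mem_iUnion₂.1
    (hm fun i => (cardBelow_mono _ (le_max_left _ _)).trans (ht i))
  calc f t < j := (hWiff t j).1 hj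
    _ ≤ T.sup id := Finset.le_sup (f := id) hjT
    _ ≤ max m (T.sup id) := le_max_right _ _

lemma eventually_cardBelow_le (hU : Free U) {Y : Set CSet} (hY : ∀ y ∈ Y, InfS y) {y b : CSet}
    (hy : y ∈ Y ∪ FinS) (hby : y ∈ Y → LeUS U b y) :
    ∀ᶠ n in (U : Filter ℕ), cardBelow y (enum b n) ≤ n := by
  rcases hy with hy | hy
  · filter_upwards [hby hy] with n hn
    exact (hY y hy).cardBelow_le_iff.2 hn
  · obtain ⟨N, hN⟩ := mem_FinS_iff_exists_cardBelow_le.1 hy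
    filter_upwards [hU (Nat.cofinite_eq_atTop ▸ eventually_ge_atTop N)] with n hn
    exact (hN _).trans hn

theorem UScaleS.uMenger_pow (hU : Free U) {Y : Set CSet} (hY : UScaleS U Y) (k : ℕ) :
    UMenger U (Fin k → (Y ∪ FinS : Set CSet)) := by
  induction k with
  | zero => exact uMenger_of_subsingleton
  | succ k ih =>
    intro f hf
    choose m hm using fun n => exists_forall_cardBelow_le_lt Set.subset_union_right (hf n) n
    obtain ⟨b, hb, hmb⟩ := exists_infS_le_enum m
    let B : Set (Y ∪ FinS : Set CSet) := Subtype.val ⁻¹' {y ∈ Y | ¬ LeUS U b y}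
    have hB : #B < frakBUS U :=
      (mk_preimage_of_injective _ _ Subtype.val_injective).trans_lt (hY.2 b hb)
    -- Tuples with a coordinate in the small set `B` lie in fewer than `𝔟(U)` slices of dimension
    -- `k`; all others are bounded by `m`, because finite sets and the members of `Y` outside `B`
    -- have at most `n` elements below `m n` for `U`-many `n`.
    obtain ⟨h, hh⟩ := ih.exists_forall_eventually_lt_of_exists_mem hf hB
    refine ⟨fun n => max (m n) (h n), fun t => ?_⟩
    by_cases ht : ∃ l, t l ∈ B
    · filter_upwards [hh t ht] with n hn
      exact hn.trans_le (le_max_right _ _)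
    · have hgood : ∀ l, ∀ᶠ n in (U : Filter ℕ), cardBelow (t l).1 (enum b n) ≤ n := fun l =>
        eventually_cardBelow_le hU hY.1 (t l).2 fun hl => by_contra fun hbl => ht ⟨l, hl, hbl⟩
      filter_upwards [eventually_all.2 hgood] with n hn
      exact (hm n t fun l => (cardBelow_mono _ (hmb n)).trans (hn l)).trans_le (le_max_left _ _)

end UMenger

section Dominating

lemma exists_dominatingS_mk_eq : ∃ D : Set CSet, DominatingS D ∧ frakDS = #D := by
  have hne : {c | ∃ D : Set CSet, DominatingS D ∧ c = #D}.Nonempty :=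
    ⟨_, {a | InfS a}, ⟨fun _ => id, fun a ha => ⟨a, ha, by simp [LeStarS]⟩⟩, rfl⟩
  exact csInf_mem hne

lemma exists_dominatingS_range :
    ∃ d : frakDS.ord.ToType → CSet, DominatingS (Set.range d) := by
  obtain ⟨D, hD, hcard⟩ := exists_dominatingS_mk_eq
  obtain ⟨e⟩ := Cardinal.eq.1 ((mk_ord_toType frakDS).trans hcard)
  refine ⟨fun i => e i, ?_⟩
  rwa [← Function.comp_def, e.surjective.range_comp, Subtype.range_coe]

lemma aleph0_le_frakDS : ℵ₀ ≤ frakDS := by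
  obtain ⟨D, hD, hcard⟩ := exists_dominatingS_mk_eq
  rw [hcard, ← Cardinal.infinite_iff, Set.infinite_coe_iff]
  intro hfin
  obtain ⟨a, ha, hDa⟩ := exists_infS_le_enum fun n => hfin.toFinset.sup (enum · n) + 1
  obtain ⟨d, hd, had⟩ := hD.2 a ha
  refine Set.infinite_univ (had.subset fun n _ => not_le.2 ?_)
  have hdn : enum d n ≤ hfin.toFinset.sup (enum · n) :=
    Finset.le_sup (f := (enum · n)) (hfin.mem_toFinset.2 hd)
  exact (Nat.lt_succ_of_le hdn).trans_le (hDa n)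

end Dominating

section Category

universe u

/-- `κ ≤ cov(X)`, where `cov(X)` is the least number of meagre subsets of the ambient space covering
`X`. This is all that the construction needs to know about a `𝔡`-Lusin set. -/
def LeCovMeagre {Z : Type u} [TopologicalSpace Z] (κ : Cardinal.{u}) (X : Set Z) : Prop :=
  ∀ ⦃J : Type u⦄ (M : J → Set Z), #J < κ → (∀ j, IsMeagre (M j)) → ¬ X ⊆ ⋃ j, M j

lemma leCovMeagre_of_isRegular {Z : Type u} [TopologicalSpace Z] {κ : Cardinal.{u}} {X : Set Z}
    (hκ : κ.IsRegular) (hcard : κ ≤ #X)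
    (hX : ∀ M : Set Z, IsMeagre M → #(X ∩ M : Set Z) < κ) : LeCovMeagre κ X := by
  intro J M hJ hM hcover
  have hlt : #(⋃ j, X ∩ M j : Set Z) < κ :=
    (card_iUnion_lt_iff_forall_of_isRegular hκ hJ).2 fun j => hX _ (hM j)
  rw [← Set.inter_iUnion, Set.inter_eq_left.2 hcover] at hlt
  exact hlt.not_ge hcard

lemma exists_infS_eqOn_cardBelow_le (x : CSet) (l m : ℕ) :
    ∃ y, InfS y ∧ (∀ i < l, y i = x i) ∧ cardBelow y m ≤ l := by
  refine ⟨fun i => if i < l then x i else decide (m ≤ i), ?_, fun i hi => if_pos hi, ?_⟩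
  · refine (Set.Ici_infinite (max l m)).mono fun i (hi : max l m ≤ i) => ?_
    obtain ⟨hl, hm⟩ := max_le_iff.1 hi
    simp [supp, hl.not_gt, hm]
  · rw [cardBelow, Nat.count_eq_card_filter_range]
    refine (Finset.card_le_card fun i hi => ?_).trans (Finset.card_range l).le
    obtain ⟨him, hi⟩ := Finset.mem_filter.1 hi
    rw [Finset.mem_range] at him ⊢
    by_contra hil
    simp [hil, him.not_ge] at hi

lemma isOpen_setOf_le_enum (m n : ℕ) : IsOpen {x : OmegaInf | m ≤ enum x.1 n} := by
  have heq : {x : OmegaInf | m ≤ enum x.1 n} = (fun x => cardBelow x.1 m) ⁻¹' Set.Iic n := by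
    ext x
    exact (InfS.cardBelow_le_iff x.2).symm
  rw [heq]
  exact (isOpen_discrete _).preimage ((continuous_cardBelow m).comp continuous_subtype_val)

lemma dense_setOf_exists_le_enum {u : Set ℕ} (hu : u.Infinite) (b : ℕ → ℕ) (N : ℕ) :
    Dense {x : OmegaInf | ∃ n ∈ u, N ≤ n ∧ b n ≤ enum x.1 n} := by
  intro x
  choose n hnu hn using fun l : ℕ => hu.exists_gt (l + N)
  choose y hy hyx hyn using fun l => exists_infS_eqOn_cardBelow_le x.1 l (b (n l))
  refine mem_closure_of_tendsto (f := fun l => (⟨y l, hy l⟩ : OmegaInf)) (b := atTop) ?_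
    (.of_forall fun l => ⟨n l, hnu l, ?_, ?_⟩)
  · rw [tendsto_subtype_rng, tendsto_pi_nhds]
    refine fun i => tendsto_nhds_of_eventually_eq ?_
    filter_upwards [eventually_gt_atTop i] with l hl using hyx l i hl
  · exact (Nat.le_add_left _ _).trans (hn l).le
  · exact (hy l).cardBelow_le_iff.1 ((hyn l).trans ((Nat.le_add_right _ _).trans (hn l).le))

lemma isMeagre_setOf_finite_inter_le_enum {u : Set ℕ} (hu : u.Infinite) (b : ℕ → ℕ) :
    IsMeagre {x : OmegaInf | (u ∩ {n | b n ≤ enum x.1 n}).Finite} := by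
  have hopen : ∀ N, IsOpen {x : OmegaInf | ∃ n ∈ u, N ≤ n ∧ b n ≤ enum x.1 n} := by
    intro N
    simp only [Set.ofPred_exists, Set.ofPred_and]
    exact isOpen_iUnion fun n => isOpen_const.inter (isOpen_const.inter (isOpen_setOf_le_enum _ _))
  have hmem : (⋂ N : ℕ, {x : OmegaInf | ∃ n ∈ u, N ≤ n ∧ b n ≤ enum x.1 n}) ∈
      residual OmegaInf :=
    countable_iInter_mem.2 fun N =>
      residual_of_dense_open (hopen N) (dense_setOf_exists_le_enum hu b N)
  refine mem_of_superset hmem fun x hx hfin => ?_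
  obtain ⟨M, hM⟩ := hfin.bddAbove
  obtain ⟨n, hnu, hn, hbn⟩ := Set.mem_iInter.1 hx (M + 1)
  exact (hM ⟨hnu, hbn⟩).not_gt hn

lemma LeCovMeagre.exists_forall_infinite_inter {κ : Cardinal} {X : Set OmegaInf}
    (hX : LeCovMeagre κ X) {J : Type} (hJ : #J < κ) (u : J → Set ℕ) (b : J → ℕ → ℕ) :
    ∃ a ∈ X, ∀ j, (u j).Infinite → (u j ∩ {n | b j n ≤ enum a.1 n}).Infinite := by
  let M : {j // (u j).Infinite} → Set OmegaInf := fun j =>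
    {x | (u j ∩ {n | b j n ≤ enum x.1 n}).Finite}
  have hnot : ¬ X ⊆ ⋃ j, M j := hX M ((mk_subtype_le _).trans_lt hJ) fun j =>
    isMeagre_setOf_finite_inter_le_enum j.2 (b j)
  obtain ⟨a, haX, ha⟩ := Set.not_subset.1 hnot
  exact ⟨a, haX, fun j hj hfin => ha (Set.mem_iUnion.2 ⟨⟨j, hj⟩, hfin⟩)⟩

end Category

section Ladder

lemma exists_forall_of_forall_Iio {I A : Type*} [Preorder I] [WellFoundedLT I]
    {P : ∀ j : I, (Set.Iio j → A) → A → Prop} (hP : ∀ j g, ∃ a, P j g a) :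
    ∃ x : I → A, ∀ j, P j (fun i => x i) (x j) := by
  choose c hc using hP
  let step : ∀ j : I, (∀ i, i < j → A) → A := fun j g => c j fun i => g i.1 i.2
  refine ⟨(wellFounded_lt (α := I)).fix step, fun j => ?_⟩
  rw [WellFounded.fix_eq]
  exact hc j _

lemma mk_finset_lt {α : Type*} {κ : Cardinal} (hκ : ℵ₀ ≤ κ) (h : #α < κ) : #(Finset α) < κ := by
  cases finite_or_infinite α
  · exact mk_lt_aleph0.trans_le hκ
  · rwa [mk_finset_of_infinite]

/-- The set `⋂ {[d i ≤ x j] : i < j in F}`. These sets generate the filter modulo which every `x j`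
bounds all the earlier `d i`. -/
def commonLe {I : Type*} [LT I] (d x : I → ℕ → ℕ) (F : Finset I) : Set ℕ :=
  {n | ∀ i ∈ F, ∀ j ∈ F, i < j → d i n ≤ x j n}

lemma commonLe_map {I J : Type*} [Preorder I] [Preorder J] (e : J ↪o I) (d x : I → ℕ → ℕ)
    (F : Finset J) : commonLe d x (F.map e.toEmbedding) = commonLe (d ∘ e) (x ∘ e) F := by
  simp [commonLe]

lemma commonLe_insert {I : Type*} [LinearOrder I] (d x : I → ℕ → ℕ) {F : Finset I} {j : I}
    (hF : ∀ i ∈ F, i < j) :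
    commonLe d x (insert j F) = commonLe d x F ∩ {n | F.sup (d · n) ≤ x j n} := by
  ext n
  simp only [commonLe, Set.mem_ofPred_eq, Set.mem_inter_iff, Finset.sup_le_iff,
    Finset.forall_mem_insert]
  grind

variable {I : Type} [LinearOrder I]

lemma LeCovMeagre.exists_forall_infinite_commonLe [WellFoundedLT I] {κ : Cardinal}
    {X : Set OmegaInf} (hX : LeCovMeagre κ X) (hκ : ℵ₀ ≤ κ) (hI : ∀ j : I, #(Set.Iio j) < κ)
    (d : I → ℕ → ℕ) :
    ∃ x : I → OmegaInf, (∀ i, x i ∈ X) ∧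
      ∀ F, (commonLe d (fun i => enum (x i).1) F).Infinite := by
  have hstep : ∀ (j : I) (g : Set.Iio j → OmegaInf), ∃ a, a ∈ X ∧ ∀ F : Finset (Set.Iio j),
      (commonLe (fun i : Set.Iio j => d i) (fun i => enum (g i).1) F).Infinite →
        (commonLe (fun i : Set.Iio j => d i) (fun i => enum (g i).1) F ∩
          {n | F.sup (fun i => d i n) ≤ enum a.1 n}).Infinite := fun j g =>
    hX.exists_forall_infinite_inter (mk_finset_lt hκ (hI j)) _ fun F n => F.sup fun i => d i n
  obtain ⟨x, hx⟩ := exists_forall_of_forall_Iio hstep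
  refine ⟨x, fun i => (hx i).1, fun F => ?_⟩
  induction F using Finset.induction_on_max with
  | empty => simpa [commonLe] using Set.infinite_univ
  | insert j F hF ih =>
    obtain ⟨G, rfl⟩ : ∃ G : Finset (Set.Iio j),
        G.map (OrderEmbedding.subtype (· ∈ Set.Iio j)).toEmbedding = F :=
      ⟨F.subtype _, Finset.subtype_map_of_mem hF⟩
    rw [commonLe_map] at ih
    simp only [commonLe_insert _ _ hF, commonLe_map, Finset.sup_map]
    exact (hx j).2 G ih

theorem LeCovMeagre.exists_free_ultrafilter_ladder [WellFoundedLT I] {κ : Cardinal}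
    {X : Set OmegaInf} (hX : LeCovMeagre κ X) (hκ : ℵ₀ ≤ κ) (hI : ∀ j : I, #(Set.Iio j) < κ)
    (d : I → CSet) :
    ∃ (x : I → OmegaInf) (U : Ultrafilter ℕ), (∀ i, x i ∈ X) ∧ Free U ∧
      ∀ i j, i < j → LeUS U (d i) (x j) := by
  obtain ⟨x, hxX, hx⟩ := hX.exists_forall_infinite_commonLe hκ hI fun i => enum (d i)
  obtain ⟨U, hU, hxU⟩ := exists_free_ultrafilter_of_infinite_iInter
    (A := fun p : {p : I × I // p.1 < p.2} => {n | enum (d p.1.1) n ≤ enum (x p.1.2).1 n})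
    fun F hF => by
      refine (hx (hF.toFinset.image (·.1.1) ∪ hF.toFinset.image (·.1.2))).mono fun n hn => ?_
      refine Set.mem_iInter₂.2 fun p hp => hn _ ?_ _ ?_ p.2
      · exact Finset.mem_union_left _ (Finset.mem_image_of_mem _ (hF.mem_toFinset.2 hp))
      · exact Finset.mem_union_right _ (Finset.mem_image_of_mem _ (hF.mem_toFinset.2 hp))
  exact ⟨x, U, hxX, hU, fun i j hij => hxU ⟨(i, j), hij⟩⟩

variable {U : Ultrafilter ℕ} {d : I → CSet} {x : I → OmegaInf}

theorem cof_le_frakBUS (hU : Free U) (hd : DominatingS (Set.range d))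
    (hx : ∀ i j, i < j → LeUS U (d i) (x j)) : Order.cof I ≤ frakBUS U := by
  refine le_frakBUS fun A hA hcard => ?_
  choose s hs using fun a : A => Set.exists_range_iff.1 (hd.2 a (hA a a.2))
  have hncof : ¬ IsCofinal (Set.range s) := fun h =>
    ((Order.cof_le h).trans mk_range_le).not_gt hcard
  obtain ⟨j, hj⟩ := not_isCofinal_iff.1 hncof
  exact ⟨x j, (x j).2, fun a ha =>
    ((hs ⟨a, ha⟩).leUS hU).trans (hx _ _ (hj _ (Set.mem_range_self _)))⟩

lemma mk_setOf_not_leUS_lt (hU : Free U) (hd : DominatingS (Set.range d))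
    (hx : ∀ i j, i < j → LeUS U (d i) (x j)) {κ : Cardinal} (hI : ∀ j : I, #(Set.Iic j) < κ)
    {b : CSet} (hb : InfS b) : #{i | ¬ LeUS U b (x i)} < κ := by
  obtain ⟨_, ⟨i₀, rfl⟩, hbi⟩ := hd.2 b hb
  refine (mk_le_mk_of_subset fun i hi => ?_).trans_lt (hI i₀)
  exact not_lt.1 fun hlt => hi ((hbi.leUS hU).trans (hx _ _ hlt))

end Ladder

theorem stmt7_general (hreg : frakDS.ord.cof = frakDS) {X : Set OmegaInf}
    (hX : LeCovMeagre frakDS X) :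
    ∃ Y : Set CSet, (∀ k : ℕ, Menger (Fin k → ↥Y)) ∧ ¬ Menger (↥X × ↥Y) := by
  have hIio : ∀ j : frakDS.ord.ToType, #(Set.Iio j) < frakDS := fun j => by
    simpa using mk_Iio_lt j
  have hIic : ∀ j : frakDS.ord.ToType, #(Set.Iic j) < frakDS := fun j => by
    simpa [aleph0_le_frakDS] using mk_Iic_lt j
  obtain ⟨d, hd⟩ := exists_dominatingS_range
  obtain ⟨x, U, hxX, hU, hx⟩ := hX.exists_free_ultrafilter_ladder aleph0_le_frakDS hIio d
  choose z hz hzx hdz using fun i => InfS.exists_supp_subset_le_enum (x i).2 (enum (d i))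
  have hzdom : DominatingS (Set.range z) := by
    refine ⟨Set.forall_mem_range.2 hz, fun a ha => ?_⟩
    obtain ⟨_, ⟨i, rfl⟩, hai⟩ := hd.2 a ha
    exact ⟨z i, Set.mem_range_self i, hai.subset fun n hn h => hn (h.trans (hdz i n))⟩
  have hle : frakDS ≤ frakBUS U := by
    simpa [hreg] using cof_le_frakBUS hU hd hx
  have hscale : UScaleS (twoU U) (Set.range fun i => uplus (x i).1 (z i)) :=
    uScaleS_twoU_range_uplus (fun i => (x i).2) hz hzx fun b hb =>
      (mk_setOf_not_leUS_lt hU hd hx hIic hb).trans_le hle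
  have htwo : Free (twoU U) := hU.map (mul_right_injective₀ two_ne_zero)
  exact ⟨_, fun k => (hscale.uMenger_pow htwo k).menger,
    not_menger_prod_range_uplus_union_FinS hxX hzdom⟩

/-- if `cf(𝔡) = 𝔡`, then for every `𝔡`-Lusin set `X ⊆ [ω]^ω` there is a
set `Y ⊆ P(ℕ)` all of whose finite powers are Menger while `X × Y` is not Menger. -/
theorem stmt7 (hreg : frakDS.ord.cof = frakDS)
    (X : Set ↥OmegaInf) (hXcard : frakDS ≤ #X)
    (hXlusin : ∀ M : Set ↥OmegaInf, IsMeagre M → #(↥(X ∩ M)) < frakDS) :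
    ∃ Y : Set CSet, (∀ k : ℕ, Menger (Fin k → ↥Y)) ∧ ¬ Menger (↥X × ↥Y) := by
  exact stmt7_general hreg (leCovMeagre_of_isRegular ⟨aleph0_le_frakDS, hreg.ge⟩ hXcard hXlusin)
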